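/- (One-step coupling estimate for the TRMC scheme.) Under the same independence and optimal-coupling setup as for the Nanbu one-step estimate, but with the TRMC updates V_{n+1}^i = (1−τ_n^{i,1}) V_n^i + τ_n^{i,1}(1−τ_n^{i,2}) 𝒞(V_n^i, V_n^{j(α_n^i)}, θ_n^i) + τ_n^{i,1} τ_n^{i,2} M_n^i and W_{n+1}^i = (1−τ_n^{i,1}) W_n^i + τ_n^{i,1}(1−τ_n^{i,2}) 𝒞(W_n^i, W*_{f_n}(V_n, α_n^i), θ_n^i) + τ_n^{i,1} τ_n^{i,2} M_n^i, where both systems share the same random variables τ_n^{i,1}, τ_n^{i,2} ∼ Bernoulli(τ), α_n^i uniform on [0,N), θ_n^i ∼ b, and M_n^i ∼ f_∞, there exist constants C₁, C₂ > 0 depending only on L_𝒞 and M_∞(b) such that for each i, E|V_{n+1}^i − W_{n+1}^i| ≤ (1 + τ C₁) E|V_n^i − W_n^i| + τ(1−τ) C₂ E[W₁(f_n^N, f_n)], where f_n^N := (1/N)Σ_i δ_{V_n^i}. -/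

import Mathlib

open MeasureTheory ProbabilityTheory Set
open scoped ENNReal

noncomputable section

/-- `Vec d` is the Euclidean space `ℝ^d`. -/
abbrev Vec (d : ℕ) := EuclideanSpace ℝ (Fin d)

/-- Wasserstein-1 distance between two measures, defined as the infimum of
transport costs over all couplings. -/
noncomputable def W1 {E : Type*} [MeasurableSpace E] [NormedAddCommGroup E]
    (μ ν : Measure E) : ℝ :=
  sInf { c : ℝ | ∃ γ : Measure (E × E),
    γ.map Prod.fst = μ ∧ γ.map Prod.snd = ν ∧ c = ∫ p, ‖p.1 - p.2‖ ∂γ }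

/-- Gain part `Q⁺(f,g) = 𝒞_#(f ⊗ g ⊗ b)` of the collisional operator. -/
noncomputable def Qgain {E P : Type*} [MeasurableSpace E] [MeasurableSpace P]
    (𝒞 : E → E → P → E) (b : Measure P) (f g : Measure E) : Measure E :=
  ((f.prod g).prod b).map fun p => 𝒞 p.1.1 p.1.2 p.2

/-- `q`-th moment `M_q(μ) = ∫ ‖v‖^q dμ`. -/
noncomputable def momq {E : Type*} [MeasurableSpace E] [NormedAddCommGroup E]
    (q : ℝ) (μ : Measure E) : ℝ := ∫ v, ‖v‖ ^ q ∂μ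

/-- Bernoulli law `(1-p)δ₀ + pδ₁` on `ℝ`. -/
noncomputable def bern (p : ℝ) : Measure ℝ :=
  ENNReal.ofReal (1 - p) • Measure.dirac (0 : ℝ) + ENNReal.ofReal p • Measure.dirac 1

/-- Uniform distribution on `[0,N)`. -/
noncomputable def unifIco (N : ℕ) : Measure ℝ :=
  ((N : ℝ≥0∞))⁻¹ • volume.restrict (Set.Ico (0 : ℝ) (N : ℝ))

/-- Index `j(α) = ⌊α⌋ + 1` (in 0-based indexing, `⌊α⌋`) of the collision partner. -/
def jIdx (N : ℕ) [NeZero N] (α : ℝ) : Fin N :=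
  ⟨⌊α⌋.toNat % N, Nat.mod_lt _ (Nat.pos_of_ne_zero (NeZero.ne N))⟩

/-- Empirical measure of a particle configuration. -/
noncomputable def empMeas {E : Type*} [MeasurableSpace E] {N : ℕ} (v : Fin N → E) : Measure E :=
  ((N : ℝ≥0∞))⁻¹ • ∑ i, Measure.dirac (v i)

/-- Forward Euler iterates `f_{n+1} = (1-Δt) f_n + Δt Q⁺(f_n,f_n)`. -/
noncomputable def eulerSeq {E P : Type*} [MeasurableSpace E] [MeasurableSpace P]
    (𝒞 : E → E → P → E) (b : Measure P) (f₀ : Measure E) (Δt : ℝ) : ℕ → Measure E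
  | 0 => f₀
  | n + 1 =>
      ENNReal.ofReal (1 - Δt) • eulerSeq 𝒞 b f₀ Δt n +
        ENNReal.ofReal Δt • Qgain 𝒞 b (eulerSeq 𝒞 b f₀ Δt n) (eulerSeq 𝒞 b f₀ Δt n)

/-- Piecewise-linear-in-time interpolation of the forward Euler iterates. -/
noncomputable def eulerInterp {E P : Type*} [MeasurableSpace E] [MeasurableSpace P]
    (𝒞 : E → E → P → E) (b : Measure P) (f₀ : Measure E) (Δt : ℝ) (t : ℝ) : Measure E :=
  ENNReal.ofReal (1 - (t - ⌊t / Δt⌋.toNat * Δt) / Δt) • eulerSeq 𝒞 b f₀ Δt ⌊t / Δt⌋.toNat +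
    ENNReal.ofReal ((t - ⌊t / Δt⌋.toNat * Δt) / Δt) • eulerSeq 𝒞 b f₀ Δt (⌊t / Δt⌋.toNat + 1)

/-- Monte Carlo rate `ε(N)` from `fournier2015rate`. -/
noncomputable def epsRate (d N : ℕ) : ℝ :=
  if d = 1 then (N : ℝ) ^ (-(1/2 : ℝ))
  else if d = 2 then (N : ℝ) ^ (-(1/2 : ℝ)) * Real.log (1 + N)
  else (N : ℝ) ^ (-(1 / (d : ℝ)))

/-- Right-hand side of the weak formulation of the Boltzmann-type equation,
tested against `φ`. -/
noncomputable def collRHS {E P : Type*} [MeasurableSpace E] [MeasurableSpace P]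
    (𝒞 : E → E → P → E) (b : Measure P) (μ : Measure E) (φ : E → ℝ) : ℝ :=
  (1/2) * ∫ p, (φ (𝒞 p.1.1 p.1.2 p.2) + φ (𝒞 p.1.2 p.1.1 p.2) - φ p.1.1 - φ p.1.2)
    ∂((μ.prod μ).prod b)

/-- Weak measure solution of `∂ₜ f = Q(f,f)` on `[0,T]`, with values in `P₁(ℝ^d)`
(continuity in the Wasserstein-1 distance), in integrated-in-time form. -/
def IsWeakSol {d m : ℕ} (𝒞 : Vec d → Vec d → Vec m → Vec d) (b : Measure (Vec m))
    (T : ℝ) (f : ℝ → Measure (Vec d)) : Prop :=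
  (∀ t ∈ Set.Icc (0:ℝ) T, IsProbabilityMeasure (f t)) ∧
  (∀ t ∈ Set.Icc (0:ℝ) T, Integrable (fun v : Vec d => ‖v‖) (f t)) ∧
  (∀ t ∈ Set.Icc (0:ℝ) T, ∀ ε > (0:ℝ), ∃ δ > (0:ℝ),
     ∀ s ∈ Set.Icc (0:ℝ) T, |s - t| < δ → W1 (f s) (f t) < ε) ∧
  ∀ φ : Vec d → ℝ, ContDiff ℝ (⊤ : ℕ∞) φ → HasCompactSupport φ →
    ∀ t ∈ Set.Icc (0:ℝ) T,
      (∫ v, φ v ∂(f t)) - (∫ v, φ v ∂(f 0)) = ∫ s in (0:ℝ)..t, collRHS 𝒞 b (f s) φ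

lemma bern_lintegral (τ : ℝ) (f : ℝ → ℝ≥0∞) :
    ∫⁻ x, f x ∂(bern τ) = ENNReal.ofReal (1 - τ) * f 0 + ENNReal.ofReal τ * f 1 := by
  simp [bern, lintegral_add_measure, lintegral_smul_measure]

lemma bern_prob (τ : ℝ) (h : τ ∈ Set.Ioo (0:ℝ) 1) : IsProbabilityMeasure (bern τ) := by
  constructor
  have := bern_lintegral τ (fun _ => 1)
  simp only [lintegral_const, one_mul, mul_one] at this
  rw [this, ← ENNReal.ofReal_add (by linarith [h.2]) (by linarith [h.1])]
  simp

lemma unif_prob (N : ℕ) [NeZero N] : IsProbabilityMeasure (unifIco N) := by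
  constructor
  simp only [unifIco, Measure.smul_apply, Measure.restrict_apply MeasurableSet.univ,
    Set.univ_inter, Real.volume_Ico, sub_zero, ENNReal.ofReal_natCast, smul_eq_mul]
  exact ENNReal.inv_mul_cancel (by exact_mod_cast NeZero.ne N) (ENNReal.natCast_ne_top N)

lemma jIdx_meas (N : ℕ) [NeZero N] : Measurable (jIdx N) := by
  have h : Measurable (fun k : ℤ => (⟨k.toNat % N,
    Nat.mod_lt _ (Nat.pos_of_ne_zero (NeZero.ne N))⟩ : Fin N)) := measurable_from_top
  exact h.comp Int.measurable_floor

lemma eval_meas {E X : Type*} [MeasurableSpace E] [MeasurableSpace X] {N : ℕ}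
    {f : X → Fin N → E} {j : X → Fin N} (hf : Measurable f) (hj : Measurable j) :
    Measurable fun x => f x (j x) := by
  have h : Measurable (fun p : (Fin N → E) × Fin N => p.1 p.2) :=
    measurable_from_prod_countable_left (fun k => measurable_pi_apply k)
  exact h.comp (hf.prodMk hj)

lemma W1_comm {E : Type*} [MeasurableSpace E] [NormedAddCommGroup E] 
    (μ ν : Measure E) : W1 μ ν = W1 ν μ := by
  have key : ∀ μ ν : Measure E, { c : ℝ | ∃ γ : Measure (E × E),
      γ.map Prod.fst = μ ∧ γ.map Prod.snd = ν ∧ c = ∫ p, ‖p.1 - p.2‖ ∂γ } ⊆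
      { c : ℝ | ∃ γ : Measure (E × E),
      γ.map Prod.fst = ν ∧ γ.map Prod.snd = μ ∧ c = ∫ p, ‖p.1 - p.2‖ ∂γ } := by
    rintro μ ν c ⟨γ, h1, h2, rfl⟩
    refine ⟨γ.map Prod.swap, ?_, ?_, ?_⟩
    · rw [Measure.map_map measurable_fst measurable_swap]; exact h2
    · rw [Measure.map_map measurable_snd measurable_swap]; exact h1
    · have := integral_map_equiv (μ := γ) (MeasurableEquiv.prodComm (α := E) (β := E))
        (fun p : E × E => ‖p.1 - p.2‖)
      refine Eq.trans ?_ this.symm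
      exact integral_congr_ae (ae_of_all _ fun p => norm_sub_rev _ _)
  unfold W1
  rw [(key μ ν).antisymm (key ν μ)]

/-- The inner estimate: partner distance integrated over the uniform variable. -/
lemma partner_lintegral {d N : ℕ} [NeZero N] (fn : Measure (Vec d))
    (hfn : Integrable (fun v : Vec d => ‖v‖) fn)
    (Wstar : (Fin N → Vec d) × ℝ → Vec d) (hW : Measurable Wstar) (v : Fin N → Vec d)
    (h1 : (Measure.map (fun α : ℝ => (Wstar (v, α), v (jIdx N α))) (unifIco N)).map
              Prod.fst = fn)
    (h3 : (∫ p, ‖p.1 - p.2‖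
              ∂(Measure.map (fun α : ℝ => (Wstar (v, α), v (jIdx N α))) (unifIco N)))
            = W1 fn (empMeas v)) :
    ∫⁻ α, ‖v (jIdx N α) - Wstar (v, α)‖ₑ ∂(unifIco N)
      = ENNReal.ofReal (W1 (empMeas v) fn) := by
  have := unif_prob N
  have m1 : Measurable fun α : ℝ => Wstar (v, α) := hW.comp (by fun_prop)
  have m2 : Measurable fun α : ℝ => v (jIdx N α) :=
    (measurable_of_finite v).comp (jIdx_meas N)
  rw [W1_comm, ← h3, integral_map (m1.prodMk m2).aemeasurable (by fun_prop)]
  rw [Measure.map_map measurable_fst (m1.prodMk m2)] at h1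
  have i1 : Integrable (fun α : ℝ => Wstar (v, α)) (unifIco N) := by
    rw [← h1] at hfn
    rw [integrable_map_measure (by fun_prop) (by fun_prop)] at hfn
    exact (integrable_norm_iff m1.aestronglyMeasurable).1 hfn
  have i2 : Integrable (fun α : ℝ => v (jIdx N α)) (unifIco N) := by
    refine Integrable.of_bound m2.aestronglyMeasurable (∑ j, ‖v j‖) (ae_of_all _ fun α => ?_)
    exact Finset.single_le_sum (f := fun j => ‖v j‖) (fun _ _ => norm_nonneg _)
      (Finset.mem_univ _)
  refine Eq.trans ?_ (ofReal_integral_norm_eq_lintegral_enorm (i1.sub i2)).symm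
  refine lintegral_congr fun α => ?_
  exact enorm_sub_rev _ _

/-- one-step coupling estimate for the TRMC scheme. -/
theorem trmc_one_step_coupling (Lc Mb : ℝ) (hLc : 0 < Lc) (hMb : 0 ≤ Mb) :
    ∃ C₁ > (0:ℝ), ∃ C₂ > (0:ℝ),
      ∀ (d m N : ℕ) [NeZero N]
        (b : Measure (Vec m)), IsProbabilityMeasure b →
        (∀ᵐ θ ∂b, ‖θ‖ ≤ Mb) →
      ∀ (𝒞 : Vec d → Vec d → Vec m → Vec d),
        Measurable (fun p : (Vec d × Vec d) × Vec m => 𝒞 p.1.1 p.1.2 p.2) →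
        (∀ v vs w ws θ,
          ‖𝒞 v vs θ - 𝒞 w ws θ‖ ≤ Lc * (1 + ‖θ‖) * (‖v - w‖ + ‖vs - ws‖)) →
      ∀ (τ : ℝ), τ ∈ Set.Ioo (0:ℝ) 1 →
      ∀ (fn finf : Measure (Vec d)),
        IsProbabilityMeasure fn → IsProbabilityMeasure finf →
        Integrable (fun v : Vec d => ‖v‖) fn →
        Integrable (fun v : Vec d => ‖v‖) finf →
      ∀ (Ω : Type) [MeasureSpace Ω] [IsProbabilityMeasure (ℙ : Measure Ω)]
        (V W : Fin N → Ω → Vec d)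
        (U : Fin N → Ω → ℝ × ℝ × ℝ × Vec m × Vec d)
        (Wstar : (Fin N → Vec d) × ℝ → Vec d),
        (∀ i, Measurable (V i)) → (∀ i, Measurable (W i)) →
        (∀ i, Measurable (U i)) → Measurable Wstar →
        -- the auxiliary variables (τ^{i,1}, τ^{i,2}, α^i, θ^i, M^i) are mutually
        -- independent with the prescribed laws, and independent of (V_n, W_n):
        (Measure.map (fun ω => fun i : Fin N => U i ω) ℙ
          = Measure.pi fun _ : Fin N =>
              (bern τ).prod ((bern τ).prod ((unifIco N).prod (b.prod finf)))) →
        IndepFun (fun ω => fun i : Fin N => U i ω)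
          (fun ω => fun i : Fin N => (V i ω, W i ω)) ℙ →
        -- W*_{f_n} is the map from the coupling lemma:
        (∀ v : Fin N → Vec d,
          (Measure.map (fun α : ℝ => (Wstar (v, α), v (jIdx N α))) (unifIco N)).map
              Prod.fst = fn ∧
          (Measure.map (fun α : ℝ => (Wstar (v, α), v (jIdx N α))) (unifIco N)).map
              Prod.snd = empMeas v ∧
          (∫ p, ‖p.1 - p.2‖
              ∂(Measure.map (fun α : ℝ => (Wstar (v, α), v (jIdx N α))) (unifIco N)))
            = W1 fn (empMeas v)) →
        -- finite first moments of the coupled systems: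
        (∀ i, Integrable (fun ω => ‖V i ω - W i ω‖) ℙ) →
        Integrable (fun ω => W1 (empMeas fun j => V j ω) fn) ℙ →
      ∀ i : Fin N,
        (∫ ω, ‖((1 - (U i ω).1) • V i ω +
                  ((U i ω).1 * (1 - (U i ω).2.1)) •
                    𝒞 (V i ω) (V (jIdx N (U i ω).2.2.1) ω) (U i ω).2.2.2.1 +
                  ((U i ω).1 * (U i ω).2.1) • (U i ω).2.2.2.2) -
                ((1 - (U i ω).1) • W i ω +
                  ((U i ω).1 * (1 - (U i ω).2.1)) •
                    𝒞 (W i ω) (Wstar (fun j => V j ω, (U i ω).2.2.1))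
                      (U i ω).2.2.2.1 +
                  ((U i ω).1 * (U i ω).2.1) • (U i ω).2.2.2.2)‖ ∂ℙ)
          ≤ (1 + τ * C₁) * (∫ ω, ‖V i ω - W i ω‖ ∂ℙ) +
            τ * (1 - τ) * C₂ * ∫ ω, W1 (empMeas fun j => V j ω) fn ∂ℙ := by
  refine ⟨Lc * (1 + Mb), by positivity, Lc * (1 + Mb), by positivity, ?_⟩
  intro d m N _ b hb hbM 𝒞 h𝒞 hLip τ hτ fn finf hfn hfinf hfn1 hfinf1 Ω _ _ V W U Wstar
    hV hW hU hWs hlaw hind hcoup hint hintW i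
  have hK : 0 < Lc * (1 + Mb) := by positivity
  set K := Lc * (1 + Mb) with hKdef
  have := bern_prob τ hτ
  have := unif_prob N
  let Z : Ω → Fin N → Vec d × Vec d := fun ω j => (V j ω, W j ω)
  have hZ : Measurable Z := measurable_pi_iff.2 fun j => (hV j).prodMk (hW j)
  let μU : Measure (ℝ × ℝ × ℝ × Vec m × Vec d) :=
    (bern τ).prod ((bern τ).prod ((unifIco N).prod (b.prod finf)))
  have hUi : Measure.map (U i) ℙ = μU := by
    have := (measurePreserving_eval (fun _ : Fin N => μU) i).map_eq
    rw [← hlaw, Measure.map_map (measurable_pi_apply i) (measurable_pi_iff.2 hU)] at this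
    exact this
  have hindi : IndepFun (U i) Z ℙ :=
    hind.comp (φ := fun u : Fin N → ℝ × ℝ × ℝ × Vec m × Vec d => u i)
      (ψ := fun z : Fin N → Vec d × Vec d => z) (by fun_prop) measurable_id
  have hprod : Measure.map (fun ω => (U i ω, Z ω)) ℙ = μU.prod (Measure.map Z ℙ) := by
    rw [← hUi]
    exact (indepFun_iff_map_prod_eq_prod_map_map (hU i).aemeasurable hZ.aemeasurable).1 hindi
  have : IsProbabilityMeasure (Measure.map Z ℙ) := Measure.isProbabilityMeasure_map hZ.aemeasurable
  -- difference of the collision terms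
  let D : (Fin N → Vec d × Vec d) → ℝ → Vec m → Vec d := fun z α θ =>
    𝒞 (z i).1 (z (jIdx N α)).1 θ - 𝒞 (z i).2 (Wstar (fun j => (z j).1, α)) θ
  let F : (ℝ × ℝ × ℝ × Vec m × Vec d) × (Fin N → Vec d × Vec d) → Vec d := fun p =>
    (1 - p.1.1) • ((p.2 i).1 - (p.2 i).2) +
      (p.1.1 * (1 - p.1.2.1)) • D p.2 p.1.2.2.1 p.1.2.2.2.1
  have hD : Measurable fun q : (Fin N → Vec d × Vec d) × ℝ × Vec m => D q.1 q.2.1 q.2.2 := by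
    have a1 : Measurable fun q : (Fin N → Vec d × Vec d) × ℝ × Vec m =>
        q.1 (jIdx N q.2.1) :=
      eval_meas measurable_fst ((jIdx_meas N).comp (by fun_prop))
    have a2 : Measurable fun q : (Fin N → Vec d × Vec d) × ℝ × Vec m =>
        Wstar (fun j => (q.1 j).1, q.2.1) := hWs.comp (by fun_prop)
    have a3 : Measurable fun q : (Fin N → Vec d × Vec d) × ℝ × Vec m => q.1 i := by fun_prop
    have b1 := h𝒞.comp ((a3.fst.prodMk a1.fst).prodMk
      (show Measurable fun q : (Fin N → Vec d × Vec d) × ℝ × Vec m => q.2.2 by fun_prop))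
    have b2 := h𝒞.comp ((a3.snd.prodMk a2).prodMk
      (show Measurable fun q : (Fin N → Vec d × Vec d) × ℝ × Vec m => q.2.2 by fun_prop))
    exact b1.sub b2
  have hF : Measurable F := by
    have c1 : Measurable fun p : (ℝ × ℝ × ℝ × Vec m × Vec d) × (Fin N → Vec d × Vec d) =>
        D p.2 p.1.2.2.1 p.1.2.2.2.1 :=
      hD.comp (show Measurable fun p : (ℝ × ℝ × ℝ × Vec m × Vec d) × (Fin N → Vec d × Vec d) =>
        (p.2, p.1.2.2.1, p.1.2.2.2.1) by fun_prop)
    have c2 : Measurable fun p : (ℝ × ℝ × ℝ × Vec m × Vec d) × (Fin N → Vec d × Vec d) =>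
        p.2 i := by fun_prop
    have c3 : Measurable fun p : (ℝ × ℝ × ℝ × Vec m × Vec d) × (Fin N → Vec d × Vec d) =>
        1 - p.1.1 := by fun_prop
    have c4 : Measurable fun p : (ℝ × ℝ × ℝ × Vec m × Vec d) × (Fin N → Vec d × Vec d) =>
        p.1.1 * (1 - p.1.2.1) := by fun_prop
    exact (c3.smul (c2.fst.sub c2.snd)).add (c4.smul c1)
  have hW1nn : ∀ ω, 0 ≤ W1 (empMeas fun j => V j ω) fn := by
    intro ω
    rw [W1_comm, ← (hcoup fun j => V j ω).2.2]
    exact integral_nonneg fun _ => norm_nonneg _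
  -- collision estimate
  have hDint : ∀ ω, ∫⁻ q, ‖D (Z ω) q.1 q.2.1‖ₑ ∂((unifIco N).prod (b.prod finf)) ≤
      ENNReal.ofReal (K * (‖V i ω - W i ω‖ + W1 (empMeas fun j => V j ω) fn)) := by
    intro ω
    have hmD : Measurable fun q : ℝ × Vec m × Vec d => ‖D (Z ω) q.1 q.2.1‖ₑ :=
      (hD.comp (show Measurable fun q : ℝ × Vec m × Vec d => (Z ω, q.1, q.2.1) by
        fun_prop)).enorm
    rw [lintegral_prod _ hmD.aemeasurable]
    have hbM' : ∀ᵐ y ∂(b.prod finf), ‖y.1‖ ≤ Mb :=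
      Measure.quasiMeasurePreserving_fst.ae hbM
    have step : ∀ α, ∫⁻ y, ‖D (Z ω) α y.1‖ₑ ∂(b.prod finf) ≤
        ENNReal.ofReal K * (‖V i ω - W i ω‖ₑ +
          ‖V (jIdx N α) ω - Wstar (fun j => V j ω, α)‖ₑ) := by
      intro α
      calc ∫⁻ y, ‖D (Z ω) α y.1‖ₑ ∂(b.prod finf)
          ≤ ∫⁻ y, ENNReal.ofReal K * (‖V i ω - W i ω‖ₑ +
          ‖V (jIdx N α) ω - Wstar (fun j => V j ω, α)‖ₑ) ∂(b.prod finf) := by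
            refine lintegral_mono_ae ?_
            filter_upwards [hbM'] with y hy
            rw [← ofReal_norm, ← ofReal_norm, ← ofReal_norm,
              ← ENNReal.ofReal_add (norm_nonneg _) (norm_nonneg _),
              ← ENNReal.ofReal_mul hK.le]
            refine ENNReal.ofReal_le_ofReal ((hLip _ _ _ _ _).trans ?_)
            rw [hKdef]
            gcongr
        _ = _ := by simp
    refine (lintegral_mono step).trans ?_
    have m2 : Measurable fun α : ℝ => ‖V (jIdx N α) ω - Wstar (fun j => V j ω, α)‖ₑ := by
      have m1 : Measurable fun α : ℝ => Wstar (fun j => V j ω, α) := hWs.comp (by fun_prop)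
      have m3 : Measurable fun α : ℝ => V (jIdx N α) ω :=
        (measurable_of_finite (fun j => V j ω)).comp (jIdx_meas N)
      exact (m3.sub m1).enorm
    rw [lintegral_const_mul _ (by fun_prop), lintegral_add_left measurable_const,
      partner_lintegral fn hfn1 Wstar hWs (fun j => V j ω) (hcoup _).1 (hcoup _).2.2,
      ENNReal.ofReal_mul hK.le, ENNReal.ofReal_add (norm_nonneg _) (hW1nn ω)]
    simp
  have hinner : ∀ ω, ∫⁻ u, ‖F (u, Z ω)‖ₑ ∂μU ≤
      ENNReal.ofReal ((1 - τ) * ‖V i ω - W i ω‖ +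
        τ * (1 - τ) * (K * (‖V i ω - W i ω‖ + W1 (empMeas fun j => V j ω) fn))) := by
    intro ω
    have hm : Measurable fun u => ‖F (u, Z ω)‖ₑ :=
      (hF.comp (measurable_id.prodMk measurable_const)).enorm
    have h0 : 0 ≤ τ := hτ.1.le
    have h1 : 0 ≤ 1 - τ := by linarith [hτ.2]
    have hnn := hW1nn ω
    have hm' : ∀ a : ℝ, Measurable fun y : ℝ × ℝ × Vec m × Vec d => ‖F ((a, y), Z ω)‖ₑ :=
      fun a => hm.comp (measurable_const.prodMk measurable_id)
    rw [lintegral_prod _ hm.aemeasurable, bern_lintegral,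
      lintegral_prod _ (hm' 0).aemeasurable, lintegral_prod _ (hm' 1).aemeasurable,
      bern_lintegral, bern_lintegral]
    simp only [F, sub_zero, sub_self, zero_smul, one_smul, mul_one, one_mul, mul_zero, zero_mul,
      add_zero, zero_add, enorm_zero, lintegral_const, measure_univ]
    have hs : ENNReal.ofReal (1 - τ) + ENNReal.ofReal τ = 1 := by
      rw [← ENNReal.ofReal_add h1 h0]; simp
    rw [← add_mul, hs, ENNReal.ofReal_add (by positivity) (by positivity),
      ENNReal.ofReal_mul h1, ENNReal.ofReal_mul (by positivity), ENNReal.ofReal_mul h0]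
    simp only [one_mul, mul_assoc]
    gcongr
    · exact (ofReal_norm _).ge
    · exact hDint ω
  have hb1 : Integrable (fun ω => (1 - τ) * ‖V i ω - W i ω‖ +
        τ * (1 - τ) * (K * (‖V i ω - W i ω‖ + W1 (empMeas fun j => V j ω) fn))) ℙ :=
    ((hint i).const_mul _).add ((((hint i).add hintW).const_mul _).const_mul _)
  have hpos : ∀ ω, 0 ≤ (1 - τ) * ‖V i ω - W i ω‖ +
        τ * (1 - τ) * (K * (‖V i ω - W i ω‖ + W1 (empMeas fun j => V j ω) fn)) := by
    intro ω
    have h0 : 0 ≤ τ := hτ.1.le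
    have h1 : 0 ≤ 1 - τ := by linarith [hτ.2]
    have hnn := hW1nn ω
    positivity
  have hmain : ∫ ω, ‖F (U i ω, Z ω)‖ ∂ℙ ≤ ∫ ω, ((1 - τ) * ‖V i ω - W i ω‖ +
        τ * (1 - τ) * (K * (‖V i ω - W i ω‖ + W1 (empMeas fun j => V j ω) fn))) ∂ℙ := by
    have hmF : Measurable fun ω => F (U i ω, Z ω) := hF.comp ((hU i).prodMk hZ)
    rw [integral_norm_eq_lintegral_enorm hmF.aestronglyMeasurable]
    refine ENNReal.toReal_le_of_le_ofReal (integral_nonneg hpos) ?_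
    rw [ofReal_integral_eq_lintegral_ofReal hb1 (ae_of_all _ hpos)]
    have e1 : ∫⁻ ω, ‖F (U i ω, Z ω)‖ₑ ∂ℙ =
        ∫⁻ p, ‖F p‖ₑ ∂(Measure.map (fun ω => (U i ω, Z ω)) ℙ) :=
      (lintegral_map hF.enorm ((hU i).prodMk hZ)).symm
    rw [e1, hprod, lintegral_prod_symm _ hF.enorm.aemeasurable,
      lintegral_map hF.enorm.lintegral_prod_left' hZ]
    exact lintegral_mono hinner
  have hcongr : ∀ ω, ((1 - (U i ω).1) • V i ω +
                  ((U i ω).1 * (1 - (U i ω).2.1)) •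
                    𝒞 (V i ω) (V (jIdx N (U i ω).2.2.1) ω) (U i ω).2.2.2.1 +
                  ((U i ω).1 * (U i ω).2.1) • (U i ω).2.2.2.2) -
                ((1 - (U i ω).1) • W i ω +
                  ((U i ω).1 * (1 - (U i ω).2.1)) •
                    𝒞 (W i ω) (Wstar (fun j => V j ω, (U i ω).2.2.1))
                      (U i ω).2.2.2.1 +
                  ((U i ω).1 * (U i ω).2.1) • (U i ω).2.2.2.2) = F (U i ω, Z ω) := by
    intro ω
    simp only [F, D, Z, smul_sub]
    abel
  simp only [hcongr]
  refine hmain.trans ?_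
  have i1 := (hint i)
  have i2 : Integrable (fun ω => ‖V i ω - W i ω‖ + W1 (empMeas fun j => V j ω) fn) ℙ :=
    i1.add hintW
  rw [integral_add (i1.const_mul _) ((i2.const_mul _).const_mul _),
    integral_const_mul, integral_const_mul, integral_const_mul, integral_add i1 hintW]
  have hA : 0 ≤ ∫ ω, ‖V i ω - W i ω‖ ∂ℙ := integral_nonneg fun _ => norm_nonneg _
  generalize (∫ ω, ‖V i ω - W i ω‖ ∂ℙ) = A at hA ⊢
  generalize (∫ ω, W1 (empMeas fun j => V j ω) fn ∂ℙ) = B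
  have h0 := hτ.1.le
  have : 0 ≤ τ * A := by positivity
  have : 0 ≤ τ * τ * K * A := by positivity
  nlinarith

end
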